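/- arXiv:0810.1386 — 7 statements merged into one kernel-verified Lean document; each statement's English description precedes it below -/
import Mathlib

section
/- (Forced Noether's theorem.) Let L : ℝⁿ × ℝⁿ → ℝ be C², f_L : ℝⁿ × ℝⁿ × ℝᵐ → ℝⁿ continuous, and let φ : ℝ × ℝⁿ → ℝⁿ be a smooth one-parameter group of diffeomorphisms of ℝⁿ (φ(0,·) = id, φ(s+t,·) = φ(s, φ(t,·)), φ jointly smooth) with infinitesimal generator ξ_Q(q) = ∂_s φ(s,q)|_{s=0}. Suppose L is invariant under the tangent lift of the action, i.e. L(φ(s,q), D_qφ(s,q)·v) = L(q,v) for all s ∈ ℝ and (q,v) ∈ ℝⁿ × ℝⁿ. Let q : [0,T] → ℝⁿ be a C² solution of the forced Euler–Lagrange equations with continuous control u : [0,T] → ℝᵐ, and assume f_L(q(t),q̇(t),u(t)) · ξ_Q(q(t)) = 0 for all t ∈ [0,T]. Then the momentum map t ↦ D₂L(q(t),q̇(t)) · ξ_Q(q(t)) is constant on [0,T]. -/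
open scoped RealInnerProductSpace

noncomputable section

abbrev Evec (n : ℕ) := EuclideanSpace ℝ (Fin n)

/-- Forced Noether's theorem: if the forcing is orthogonal to the group action,
the momentum map is constant along solutions of the forced Euler–Lagrange
equations. -/
theorem stmt_2 {n m : ℕ} (T : ℝ) (hT : 0 < T)
    (L : Evec n × Evec n → ℝ) (hL : ContDiff ℝ 2 L)
    (fL : Evec n × Evec n × Evec m → Evec n) (hfL : Continuous fL)
    (φ : ℝ × Evec n → Evec n) (hφ : ContDiff ℝ (⊤ : ℕ∞) φ)
    (hφ0 : ∀ x, φ (0, x) = x)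
    (hφgrp : ∀ s t : ℝ, ∀ x, φ (s + t, x) = φ (s, φ (t, x)))
    (ξ : Evec n → Evec n) (hξ : ∀ x, ξ x = deriv (fun s => φ (s, x)) 0)
    (hinv : ∀ (s : ℝ) (x v : Evec n),
      L (φ (s, x), fderiv ℝ (fun y => φ (s, y)) x v) = L (x, v))
    (u : ℝ → Evec m) (hu : Continuous u)
    (q : ℝ → Evec n) (hq : ContDiff ℝ 2 q)
    (hEL : ∀ t ∈ Set.Icc (0:ℝ) T,
      gradient (fun x => L (x, deriv q t)) (q t)
        - deriv (fun s => gradient (fun v => L (q s, v)) (deriv q s)) t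
        + fL (q t, deriv q t, u t) = 0)
    (horth : ∀ t ∈ Set.Icc (0:ℝ) T, ⟪fL (q t, deriv q t, u t), ξ (q t)⟫ = 0) :
    ∀ t₁ ∈ Set.Icc (0:ℝ) T, ∀ t₂ ∈ Set.Icc (0:ℝ) T,
      ⟪gradient (fun v => L (q t₁, v)) (deriv q t₁), ξ (q t₁)⟫
        = ⟪gradient (fun v => L (q t₂, v)) (deriv q t₂), ξ (q t₂)⟫ := by
  have hLd : Differentiable ℝ L := hL.differentiable (by norm_num)
  have hφd : Differentiable ℝ φ := hφ.differentiable (by simp)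
  have hFd : Differentiable ℝ (fderiv ℝ φ) :=
    (hφ.fderiv_right (m := 1) (by norm_cast)).differentiable (by norm_num)
  have hLF : Differentiable ℝ (fderiv ℝ L) :=
    (hL.fderiv_right (m := 1) (by norm_num)).differentiable (by norm_num)
  have hqd : Differentiable ℝ q := hq.differentiable (by norm_num)
  have hq'd : Differentiable ℝ (deriv q) := by
    have h2 : ContDiff ℝ (1 + 1) q := by simpa [one_add_one_eq_two] using hq
    exact (contDiff_succ_iff_deriv.1 h2).2.2.differentiable (by norm_num)
  -- curves in the group direction
  have hline : ∀ (x : Evec n) (s : ℝ), HasDerivAt (fun s : ℝ => (s, x)) ((1 : ℝ), (0 : Evec n)) s :=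
    fun x s => (hasDerivAt_id s).prodMk (hasDerivAt_const s x)
  have hξ' : ∀ x, ξ x = fderiv ℝ φ (0, x) (1, 0) := by
    intro x
    rw [hξ]
    exact ((hφd (0, x)).hasFDerivAt.comp_hasDerivAt (0 : ℝ) (hline x 0)).deriv
  have hpart : ∀ (s : ℝ) (x v : Evec n),
      fderiv ℝ (fun y => φ (s, y)) x v = fderiv ℝ φ (s, x) (0, v) := by
    intro s x v
    have h := (hφd (s, x)).hasFDerivAt.comp x (hasFDerivAt_prodMk_right s x)
    have h2 := h.fderiv
    have h3 : fderiv ℝ (fun y => φ (s, y)) x = _ := h2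
    rw [h3]
    simp
  have hsymm : ∀ x v : Evec n, fderiv ℝ (fderiv ℝ φ) (0, x) (1, 0) (0, v)
      = fderiv ℝ (fderiv ℝ φ) (0, x) (0, v) (1, 0) := by
    intro x v
    have h : IsSymmSndFDerivAt ℝ φ ((0 : ℝ), x) :=
      (hφ.contDiffAt).isSymmSndFDerivAt (by simp; norm_cast)
    exact h _ _
  have hinf : ∀ x v : Evec n, fderiv ℝ L (x, v)
      (ξ x, fderiv ℝ (fderiv ℝ φ) (0, x) (0, v) (1, 0)) = 0 := by
    intro x v
    have h1 : HasDerivAt (fun s : ℝ => φ (s, x)) (ξ x) 0 := by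
      rw [hξ']
      exact (hφd (0, x)).hasFDerivAt.comp_hasDerivAt (0 : ℝ) (hline x 0)
    have h2 : HasDerivAt (fun s : ℝ => fderiv ℝ φ (s, x)) (fderiv ℝ (fderiv ℝ φ) (0, x) (1, 0)) 0 :=
      (hFd (0, x)).hasFDerivAt.comp_hasDerivAt (0 : ℝ) (hline x 0)
    have h3 : HasDerivAt (fun s : ℝ => fderiv ℝ φ (s, x) (0, v))
        (fderiv ℝ (fderiv ℝ φ) (0, x) (1, 0) (0, v)) 0 := by
      simpa using h2.clm_apply (hasDerivAt_const (0 : ℝ) ((0 : ℝ), v))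
    have h0 : (φ (0, x), fderiv ℝ φ (0, x) (0, v)) = (x, v) := by
      rw [← hpart, hφ0]
      have : (fun y => φ (0, y)) = id := funext hφ0
      rw [this]; simp
    have h4 := HasFDerivAt.comp_hasDerivAt_of_eq (0 : ℝ) (hLd (x, v)).hasFDerivAt (h1.prodMk h3) h0.symm
    have h5 : (L ∘ fun s : ℝ => (φ (s, x), fderiv ℝ φ (s, x) (0, v))) = fun _ => L (x, v) := by
      funext s
      simp only [Function.comp]
      rw [← hpart, hinv]
    rw [h5] at h4
    rw [← hsymm]
    exact h4.unique (hasDerivAt_const _ _)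
  -- gradients
  have hg1 : ∀ x v w : Evec n, ⟪gradient (fun y => L (y, v)) x, w⟫ = fderiv ℝ L (x, v) (w, 0) := by
    intro x v w
    have h := ((hLd (x, v)).hasFDerivAt.comp x (hasFDerivAt_prodMk_left (𝕜 := ℝ) x v)).fderiv
    have h3 : fderiv ℝ (fun y => L (y, v)) x = _ := h
    rw [gradient, InnerProductSpace.toDual_symm_apply, h3]
    simp
  have hg2' : ∀ x v : Evec n, gradient (fun y => L (x, y)) v
      = (InnerProductSpace.toDual ℝ (Evec n)).symm
        ((fderiv ℝ L (x, v)).comp (ContinuousLinearMap.inr ℝ (Evec n) (Evec n))) := by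
    intro x v
    have h := ((hLd (x, v)).hasFDerivAt.comp v (hasFDerivAt_prodMk_right x v)).fderiv
    have h3 : fderiv ℝ (fun y => L (x, y)) v = _ := h
    rw [gradient, h3]
  have hg2 : ∀ x v w : Evec n, ⟪gradient (fun y => L (x, y)) v, w⟫ = fderiv ℝ L (x, v) (0, w) := by
    intro x v w
    rw [hg2', InnerProductSpace.toDual_symm_apply]
    simp
  have hpd : Differentiable ℝ (fun s => gradient (fun v => L (q s, v)) (deriv q s)) := by
    simp only [hg2']
    have h1 : Differentiable ℝ (fun s => (fderiv ℝ L (q s, deriv q s)).comp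
        (ContinuousLinearMap.inr ℝ (Evec n) (Evec n))) :=
      (hLF.comp (hqd.prodMk hq'd)).clm_comp (differentiable_const _)
    exact (InnerProductSpace.toDual ℝ (Evec n)).symm.toContinuousLinearEquiv.differentiable.comp h1
  have hξq : ∀ t, HasDerivAt (fun s => ξ (q s))
      (fderiv ℝ (fderiv ℝ φ) (0, q t) (0, deriv q t) (1, 0)) t := by
    intro t
    simp only [hξ']
    have h1 : HasDerivAt (fun s : ℝ => ((0 : ℝ), q s)) ((0 : ℝ), deriv q t) t :=
      (hasDerivAt_const t (0 : ℝ)).prodMk (hqd t).hasDerivAt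
    have h2 : HasDerivAt (fun s : ℝ => fderiv ℝ φ (0, q s)) _ t :=
      (hFd (0, q t)).hasFDerivAt.comp_hasDerivAt t h1
    simpa using h2.clm_apply (hasDerivAt_const t ((1 : ℝ), (0 : Evec n)))
  have hJ : ∀ t ∈ Set.Icc (0:ℝ) T, HasDerivAt
      (fun t => ⟪gradient (fun v => L (q t, v)) (deriv q t), ξ (q t)⟫) 0 t := by
    intro t ht
    have h := (hpd t).hasDerivAt.inner ℝ (hξq t)
    have hp : deriv (fun s => gradient (fun v => L (q s, v)) (deriv q s)) t
        = gradient (fun x => L (x, deriv q t)) (q t) + fL (q t, deriv q t, u t) := by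
      have := hEL t ht
      rw [sub_add_eq_add_sub, sub_eq_zero] at this
      exact this.symm
    rw [hp, inner_add_left, horth t ht, hg1, hg2, add_zero, add_comm, ← map_add,
      Prod.mk_add_mk, add_zero, zero_add, hinf] at h
    exact h
  have hconst : ∀ t ∈ Set.Icc (0:ℝ) T,
      ⟪gradient (fun v => L (q t, v)) (deriv q t), ξ (q t)⟫
        = ⟪gradient (fun v => L (q 0, v)) (deriv q 0), ξ (q 0)⟫ :=
    constant_of_has_deriv_right_zero
      (f := fun t => ⟪gradient (fun v => L (q t, v)) (deriv q t), ξ (q t)⟫)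
      (fun t ht => (hJ t ht).continuousAt.continuousWithinAt)
      (fun t ht => (hJ t ⟨ht.1, ht.2.le⟩).hasDerivWithinAt)
  intro t₁ h₁ t₂ h₂
  rw [hconst t₁ h₁, hconst t₂ h₂]
end
end

section
/- Let L : ℝⁿ × ℝⁿ → ℝ be C², f_L : ℝⁿ × ℝⁿ × ℝᵐ → ℝⁿ continuous, and let φ : ℝ × ℝⁿ → ℝⁿ be a smooth one-parameter group of diffeomorphisms of ℝⁿ with infinitesimal generator ξ_Q(q) = ∂_s φ(s,q)|_{s=0}, and suppose L(φ(s,q), D_qφ(s,q)·v) = L(q,v) for all s, q, v. Then for every C² solution q : [0,T] → ℝⁿ of the forced Euler–Lagrange equations with continuous control u : [0,T] → ℝᵐ, the evolution of the momentum map satisfies D₂L(q(T),q̇(T)) · ξ_Q(q(T)) − D₂L(q(0),q̇(0)) · ξ_Q(q(0)) = ∫₀ᵀ f_L(q(t),q̇(t),u(t)) · ξ_Q(q(t)) dt. -/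
open scoped RealInnerProductSpace

noncomputable section

set_option maxHeartbeats 1000000 in
/-- Evolution of the momentum map under forcing: the change of the momentum map
along a solution of the forced Euler–Lagrange equations equals the integral of
the virtual work of the force on the infinitesimal generator. -/
theorem stmt_3 {n m : ℕ} (T : ℝ) (hT : 0 < T)
    (L : Evec n × Evec n → ℝ) (hL : ContDiff ℝ 2 L)
    (fL : Evec n × Evec n × Evec m → Evec n) (hfL : Continuous fL)
    (φ : ℝ × Evec n → Evec n) (hφ : ContDiff ℝ (⊤ : ℕ∞) φ)
    (hφ0 : ∀ x, φ (0, x) = x)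
    (hφgrp : ∀ s t : ℝ, ∀ x, φ (s + t, x) = φ (s, φ (t, x)))
    (ξ : Evec n → Evec n) (hξ : ∀ x, ξ x = deriv (fun s => φ (s, x)) 0)
    (hinv : ∀ (s : ℝ) (x v : Evec n),
      L (φ (s, x), fderiv ℝ (fun y => φ (s, y)) x v) = L (x, v))
    (u : ℝ → Evec m) (hu : Continuous u)
    (q : ℝ → Evec n) (hq : ContDiff ℝ 2 q)
    (hEL : ∀ t ∈ Set.Icc (0:ℝ) T,
      gradient (fun x => L (x, deriv q t)) (q t)
        - deriv (fun s => gradient (fun v => L (q s, v)) (deriv q s)) t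
        + fL (q t, deriv q t, u t) = 0) :
    ⟪gradient (fun v => L (q T, v)) (deriv q T), ξ (q T)⟫
      - ⟪gradient (fun v => L (q 0, v)) (deriv q 0), ξ (q 0)⟫
      = ∫ t in (0:ℝ)..T, ⟪fL (q t, deriv q t, u t), ξ (q t)⟫ := by
  have hLd : Differentiable ℝ L := hL.differentiable (by norm_num)
  have hDL : ContDiff ℝ 1 (fderiv ℝ L) := hL.fderiv_right (by norm_num)
  have hφd : Differentiable ℝ φ := hφ.differentiable (by simp)
  have hφ2 : ContDiff ℝ 2 φ := hφ.of_le (WithTop.coe_le_coe.2 (le_top (a := (2 : ℕ∞))))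
  have hDφ : ContDiff ℝ 1 (fderiv ℝ φ) := hφ2.fderiv_right (by norm_num)
  have hDφd : Differentiable ℝ (fderiv ℝ φ) := hDφ.differentiable (by norm_num)
  have hqd : Differentiable ℝ q := hq.differentiable (by norm_num)
  have hq' : ContDiff ℝ 1 (deriv q) :=
    ((contDiff_succ_iff_deriv (n := 1)).1 (by simpa [one_add_one_eq_two] using hq)).2.2
  have g1 : ∀ x v w : Evec n, ⟪gradient (fun x => L (x, v)) x, w⟫ = fderiv ℝ L (x, v) (w, 0) :=
    fun x v w => by
      have h : HasFDerivAt (fun x => L (x, v))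
          ((fderiv ℝ L (x, v)).comp (ContinuousLinearMap.inl ℝ (Evec n) (Evec n))) x :=
        (hLd (x, v)).hasFDerivAt.comp x (hasFDerivAt_prodMk_left x v)
      rw [gradient, h.fderiv, InnerProductSpace.toDual_symm_apply]; simp
  have g2e : ∀ x v : Evec n, gradient (fun v => L (x, v)) v =
      (InnerProductSpace.toDual ℝ (Evec n)).symm
        ((fderiv ℝ L (x, v)).comp (ContinuousLinearMap.inr ℝ (Evec n) (Evec n))) :=
    fun x v => by
      have h : HasFDerivAt (fun v => L (x, v))
          ((fderiv ℝ L (x, v)).comp (ContinuousLinearMap.inr ℝ (Evec n) (Evec n))) v :=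
        (hLd (x, v)).hasFDerivAt.comp v (hasFDerivAt_prodMk_right x v)
      rw [gradient, h.fderiv]
  have g2 : ∀ x v w : Evec n, ⟪gradient (fun v => L (x, v)) v, w⟫ = fderiv ℝ L (x, v) (0, w) :=
    fun x v w => by
      rw [g2e, InnerProductSpace.toDual_symm_apply]; simp
  have hp : Differentiable ℝ (fun s => gradient (fun v => L (q s, v)) (deriv q s)) := by
    have h1 : ContDiff ℝ 1 (fun s => fderiv ℝ L (q s, deriv q s)) :=
      hDL.comp ((hq.of_le (by norm_num)).prodMk hq')
    have h2 : Differentiable ℝ (fun s => (fderiv ℝ L (q s, deriv q s)).comp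
        (ContinuousLinearMap.inr ℝ (Evec n) (Evec n))) :=
      (h1.differentiable (by norm_num)).clm_comp (differentiable_const _)
    simp only [g2e]
    exact (InnerProductSpace.toDual ℝ (Evec n)).symm.toContinuousLinearEquiv.differentiable.comp h2
  have hξe : ∀ x, ξ x = fderiv ℝ φ (0, x) (1, 0) := fun x => by
    rw [hξ]
    have h : HasDerivAt (fun s : ℝ => (s, x)) ((1 : ℝ), (0 : Evec n)) 0 :=
      (hasDerivAt_id _).prodMk (hasDerivAt_const _ _)
    exact ((hφd (0, x)).hasFDerivAt.comp_hasDerivAt 0 h).deriv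
  have hξd : ∀ x, HasFDerivAt ξ ((fderiv ℝ (fderiv ℝ φ) (0, x)).flip (1, 0) ∘L
      ContinuousLinearMap.inr ℝ ℝ (Evec n)) x := fun x => by
    rw [funext hξe]
    have h := ((hDφd (0, x)).hasFDerivAt.comp x (hasFDerivAt_prodMk_right (0:ℝ) x)).clm_apply
      (hasFDerivAt_const ((1:ℝ), (0 : Evec n)) x)
    refine h.congr_fderiv ?_
    ext w
    simp
  have hξc : Continuous ξ := by
    have : Differentiable ℝ ξ := fun x => (hξd x).differentiableAt
    exact this.continuous
  have hfd : ∀ (s : ℝ) (x v : Evec n),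
      fderiv ℝ (fun y => φ (s, y)) x v = fderiv ℝ φ (s, x) (0, v) := fun s x v => by
    have h : HasFDerivAt (fun y => φ (s, y))
        ((fderiv ℝ φ (s, x)).comp (ContinuousLinearMap.inr ℝ ℝ (Evec n))) x :=
      (hφd (s, x)).hasFDerivAt.comp x (hasFDerivAt_prodMk_right s x)
    rw [h.fderiv]; simp
  have hD0 : ∀ x v : Evec n, fderiv ℝ φ (0, x) (0, v) = v := fun x v => by
    rw [← hfd]; simp [hφ0]
  have key : ∀ x v : Evec n,
      fderiv ℝ L (x, v) (ξ x, fderiv ℝ (fderiv ℝ φ) (0, x) (0, v) (1, 0)) = 0 := fun x v => by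
    have hc : HasDerivAt (fun s : ℝ => (s, x)) ((1 : ℝ), (0 : Evec n)) 0 :=
      (hasDerivAt_id _).prodMk (hasDerivAt_const _ _)
    have h1 : HasDerivAt (fun s => φ (s, x)) (ξ x) 0 := by
      rw [hξe]; exact (hφd (0, x)).hasFDerivAt.comp_hasDerivAt 0 hc
    have h2 : HasDerivAt (fun s => fderiv ℝ φ (s, x) (0, v))
        (fderiv ℝ (fderiv ℝ φ) (0, x) (1, 0) (0, v)) 0 := by
      have := ((hDφd (0, x)).hasFDerivAt.comp_hasDerivAt 0 hc).clm_apply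
        (hasDerivAt_const (0:ℝ) ((0:ℝ), v))
      simpa using this
    have hs : fderiv ℝ (fderiv ℝ φ) (0, x) (1, 0) (0, v)
        = fderiv ℝ (fderiv ℝ φ) (0, x) (0, v) (1, 0) :=
      (hφ2.contDiffAt.isSymmSndFDerivAt (by simp)).eq _ _
    rw [hs] at h2
    have hLx : HasFDerivAt L (fderiv ℝ L (x, v)) (φ (0, x), fderiv ℝ φ (0, x) (0, v)) := by
      rw [hφ0, hD0]; exact (hLd _).hasFDerivAt
    have h3 := hLx.comp_hasDerivAt (0:ℝ) (h1.prodMk h2)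
    have h4 : (L ∘ fun s => (φ (s, x), fderiv ℝ φ (s, x) (0, v))) = fun _ => L (x, v) := by
      funext s; simp only [Function.comp]; rw [← hfd, hinv]
    rw [h4] at h3
    exact h3.unique (hasDerivAt_const _ _)
  symm
  apply intervalIntegral.integral_eq_sub_of_hasDerivAt
    (f := fun t => ⟪gradient (fun v => L (q t, v)) (deriv q t), ξ (q t)⟫)
  · intro t ht
    rw [Set.uIcc_of_le hT.le] at ht
    have hx : HasDerivAt (fun t => ξ (q t)) _ t :=
      (hξd (q t)).comp_hasDerivAt t (hqd t).hasDerivAt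
    have h := (hp t).hasDerivAt.inner ℝ hx
    refine h.congr_deriv ?_
    have e := congrArg (fun z => ⟪z, ξ (q t)⟫) (hEL t ht)
    simp only [inner_add_left, inner_sub_left, inner_zero_left, g1] at e
    rw [g2]
    have k := key (q t) (deriv q t)
    have hsplit : ∀ a b : Evec n, ((a, b) : Evec n × Evec n) = (a, 0) + (0, b) := by simp
    rw [hsplit (ξ (q t)), map_add] at k
    simp only [ContinuousLinearMap.comp_apply, ContinuousLinearMap.inr_apply,
      ContinuousLinearMap.flip_apply]
    linarith
  · apply Continuous.intervalIntegrable
    exact (hfL.comp (hqd.continuous.prodMk (hq'.continuous.prodMk hu))).inner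
      (hξc.comp hqd.continuous)
end
end

section
/- Let L_d : ℝⁿ × ℝⁿ → ℝ be differentiable, let φ : ℝ × ℝⁿ → ℝⁿ be a smooth one-parameter group of diffeomorphisms of ℝⁿ with infinitesimal generator ξ_Q(q) = ∂_s φ(s,q)|_{s=0}, and suppose L_d is invariant under the diagonal action: L_d(φ(s,q₀), φ(s,q₁)) = L_d(q₀,q₁) for all s, q₀, q₁. Let (q₀, …, q_N) satisfy the forced discrete Euler–Lagrange equations with discrete forces f_k⁻, f_k⁺ ∈ ℝⁿ (k = 0, …, N−1). Then (D₂L_d(q_{N−1},q_N) + f_{N−1}⁺) · ξ_Q(q_N) − (−D₁L_d(q₀,q₁) − f₀⁻) · ξ_Q(q₀) = Σ_{k=0}^{N−1} [f_k⁻ · ξ_Q(q_k) + f_k⁺ · ξ_Q(q_{k+1})]. -/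
open scoped RealInnerProductSpace

noncomputable section

theorem noether_aux {n : ℕ} (Ld : Evec n × Evec n → ℝ) (hLd : Differentiable ℝ Ld)
    (φ : ℝ × Evec n → Evec n) (hφ : ContDiff ℝ (⊤ : ℕ∞) φ)
    (hφ0 : ∀ x, φ (0, x) = x)
    (ξ : Evec n → Evec n) (hξ : ∀ x, ξ x = deriv (fun s => φ (s, x)) 0)
    (hinv : ∀ (s : ℝ) (x y : Evec n), Ld (φ (s, x), φ (s, y)) = Ld (x, y)) (x y : Evec n) :
    ⟪gradient (fun z => Ld (z, y)) x, ξ x⟫ + ⟪gradient (fun z => Ld (x, z)) y, ξ y⟫ = 0 := by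
  have hd : Differentiable ℝ φ := hφ.differentiable (by simp)
  have hc : ∀ z, HasDerivAt (fun s => φ (s, z)) (ξ z) 0 := by
    intro z
    rw [hξ z]
    apply DifferentiableAt.hasDerivAt
    fun_prop
  have hF : HasFDerivAt Ld (fderiv ℝ Ld (x, y)) (x, y) := (hLd (x, y)).hasFDerivAt
  have h1 : HasFDerivAt (fun z => Ld (z, y))
      ((fderiv ℝ Ld (x, y)).comp (ContinuousLinearMap.inl ℝ _ _)) x :=
    HasFDerivAt.comp x hF (hasFDerivAt_prodMk_left x y)
  have h2 : HasFDerivAt (fun z => Ld (x, z))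
      ((fderiv ℝ Ld (x, y)).comp (ContinuousLinearMap.inr ℝ _ _)) y :=
    HasFDerivAt.comp y hF (hasFDerivAt_prodMk_right x y)
  have h3 : HasDerivAt (fun s => Ld (φ (s, x), φ (s, y))) (fderiv ℝ Ld (x, y) (ξ x, ξ y)) 0 := by
    have hF' : HasFDerivAt Ld (fderiv ℝ Ld (x, y)) (φ (0, x), φ (0, y)) := by
      rw [hφ0, hφ0]; exact hF
    exact HasFDerivAt.comp_hasDerivAt (0 : ℝ) hF' ((hc x).prodMk (hc y))
  have h4 : fderiv ℝ Ld (x, y) (ξ x, ξ y) = 0 := by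
    simp only [hinv] at h3
    exact h3.unique (hasDerivAt_const _ _)
  unfold gradient
  rw [InnerProductSpace.toDual_symm_apply, InnerProductSpace.toDual_symm_apply,
    h1.fderiv, h2.fderiv, ← h4]
  simp [← map_add]

/-- Evolution of the discrete momentum map: for a discrete trajectory of the
forced discrete Euler–Lagrange equations with a symmetry of the discrete
Lagrangian, the change of the discrete momentum map equals the sum of the
discrete virtual work terms. -/
theorem stmt_5 {n : ℕ} (Ld : Evec n × Evec n → ℝ) (hLd : Differentiable ℝ Ld)
    (φ : ℝ × Evec n → Evec n) (hφ : ContDiff ℝ (⊤ : ℕ∞) φ)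
    (hφ0 : ∀ x, φ (0, x) = x)
    (hφgrp : ∀ s t : ℝ, ∀ x, φ (s + t, x) = φ (s, φ (t, x)))
    (ξ : Evec n → Evec n) (hξ : ∀ x, ξ x = deriv (fun s => φ (s, x)) 0)
    (hinv : ∀ (s : ℝ) (x y : Evec n), Ld (φ (s, x), φ (s, y)) = Ld (x, y))
    (N : ℕ) (hN : 1 ≤ N)
    (q : ℕ → Evec n) (fm fp : ℕ → Evec n)
    (hDEL : ∀ k, 1 ≤ k → k < N →
      gradient (fun y => Ld (q (k-1), y)) (q k)
        + gradient (fun x => Ld (x, q (k+1))) (q k)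
        + fp (k-1) + fm k = 0) :
    ⟪gradient (fun y => Ld (q (N-1), y)) (q N) + fp (N-1), ξ (q N)⟫
      - ⟪-gradient (fun x => Ld (x, q 1)) (q 0) - fm 0, ξ (q 0)⟫
      = ∑ k ∈ Finset.range N, (⟪fm k, ξ (q k)⟫ + ⟪fp k, ξ (q (k+1))⟫) := by
  have hno := noether_aux Ld hLd φ hφ hφ0 ξ hξ hinv
  obtain ⟨m, rfl⟩ : ∃ m, N = m + 1 := ⟨N - 1, by omega⟩
  clear hN
  induction m with
  | zero =>
    have h := hno (q 0) (q 1)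
    simp [inner_add_left, inner_sub_left] at h ⊢
    linarith
  | succ m ih =>
    have ih' := ih (fun k h1 h2 => hDEL k h1 (by omega))
    rw [Finset.sum_range_succ, ← ih']
    have h := hno (q (m+1)) (q (m+1+1))
    have e := congrArg (fun v => ⟪v, ξ (q (m+1))⟫) (hDEL (m+1) (by omega) (by omega))
    simp only [Nat.add_sub_cancel, inner_add_left, inner_zero_left] at e h ⊢
    linarith
end
end

section
/- (Forced discrete Noether's theorem.) Let L_d : ℝⁿ × ℝⁿ → ℝ be differentiable, let φ : ℝ × ℝⁿ → ℝⁿ be a smooth one-parameter group of diffeomorphisms of ℝⁿ with infinitesimal generator ξ_Q(q) = ∂_s φ(s,q)|_{s=0}, and suppose L_d(φ(s,q₀), φ(s,q₁)) = L_d(q₀,q₁) for all s, q₀, q₁. Let (q₀, …, q_N) satisfy the forced discrete Euler–Lagrange equations with discrete forces f_k⁻, f_k⁺ ∈ ℝⁿ (k = 0, …, N−1), and assume the forcing is orthogonal to the group action: f_k⁻ · ξ_Q(q_k) + f_k⁺ · ξ_Q(q_{k+1}) = 0 for all k = 0, …, N−1. Then the discrete momentum map is preserved: the quantity J_k := (−D₁L_d(q_k,q_{k+1})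 − f_k⁻) · ξ_Q(q_k) is independent of k ∈ {0, …, N−1}, and moreover J_k = (D₂L_d(q_k,q_{k+1}) + f_k⁺) · ξ_Q(q_{k+1}) for every k. -/
open scoped RealInnerProductSpace

noncomputable section

/-- Forced discrete Noether's theorem: if the discrete forcing is orthogonal to
the group action, the discrete momentum map is preserved along the forced
discrete Euler–Lagrange trajectory. -/
theorem stmt_6 {n : ℕ} (Ld : Evec n × Evec n → ℝ) (hLd : Differentiable ℝ Ld)
    (φ : ℝ × Evec n → Evec n) (hφ : ContDiff ℝ (⊤ : ℕ∞) φ)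
    (hφ0 : ∀ x, φ (0, x) = x)
    (hφgrp : ∀ s t : ℝ, ∀ x, φ (s + t, x) = φ (s, φ (t, x)))
    (ξ : Evec n → Evec n) (hξ : ∀ x, ξ x = deriv (fun s => φ (s, x)) 0)
    (hinv : ∀ (s : ℝ) (x y : Evec n), Ld (φ (s, x), φ (s, y)) = Ld (x, y))
    (N : ℕ)
    (q : ℕ → Evec n) (fm fp : ℕ → Evec n)
    (hDEL : ∀ k, 1 ≤ k → k < N →
      gradient (fun y => Ld (q (k-1), y)) (q k)
        + gradient (fun x => Ld (x, q (k+1))) (q k)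
        + fp (k-1) + fm k = 0)
    (horth : ∀ k < N, ⟪fm k, ξ (q k)⟫ + ⟪fp k, ξ (q (k+1))⟫ = 0) :
    (∀ k < N, ∀ l < N,
      ⟪-gradient (fun x => Ld (x, q (k+1))) (q k) - fm k, ξ (q k)⟫
        = ⟪-gradient (fun x => Ld (x, q (l+1))) (q l) - fm l, ξ (q l)⟫)
    ∧ (∀ k < N,
      ⟪-gradient (fun x => Ld (x, q (k+1))) (q k) - fm k, ξ (q k)⟫
        = ⟪gradient (fun y => Ld (q k, y)) (q (k+1)) + fp k, ξ (q (k+1))⟫) := by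
  have hd : ∀ x, HasDerivAt (fun s => φ (s, x)) (ξ x) 0 := by
    intro x
    rw [hξ]
    have hdφ : Differentiable ℝ φ := hφ.differentiable (by simp)
    have : DifferentiableAt ℝ (fun s : ℝ => φ (s, x)) 0 :=
      (hdφ (0, x)).comp (0 : ℝ) (by fun_prop : DifferentiableAt ℝ (fun s : ℝ => (s, x)) 0)
    exact this.hasDerivAt
  have key : ∀ x y, ⟪gradient (fun z => Ld (z, y)) x, ξ x⟫
      + ⟪gradient (fun z => Ld (x, z)) y, ξ y⟫ = 0 := by
    intro x y
    have hL := (hLd (x, y)).hasFDerivAt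
    have h1 : HasFDerivAt (fun z => Ld (z, y)) _ x :=
      hL.comp x (hasFDerivAt_prodMk_left x y)
    have h2 : HasFDerivAt (fun z => Ld (x, z)) _ y :=
      hL.comp y (hasFDerivAt_prodMk_right x y)
    have hc : HasDerivAt (fun s => Ld (φ (s, x), φ (s, y))) (fderiv ℝ Ld (x, y) (ξ x, ξ y)) 0 := by
      have hL' : HasFDerivAt Ld (fderiv ℝ Ld (x, y)) (φ (0, x), φ (0, y)) := by
        rw [hφ0, hφ0]; exact hL
      exact hL'.comp_hasDerivAt (0 : ℝ) ((hd x).prodMk (hd y))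
    have h0 : fderiv ℝ Ld (x, y) (ξ x, ξ y) = 0 := by
      simp only [hinv] at hc
      exact hc.unique (hasDerivAt_const _ _)
    have hs : (ξ x, ξ y) = (ξ x, (0 : Evec n)) + ((0 : Evec n), ξ y) := by simp
    rw [hs, map_add] at h0
    rw [gradient, gradient, h1.fderiv, h2.fderiv, InnerProductSpace.toDual_symm_apply,
      InnerProductSpace.toDual_symm_apply]
    simpa using h0
  have B : ∀ k < N,
      ⟪-gradient (fun x => Ld (x, q (k+1))) (q k) - fm k, ξ (q k)⟫
        = ⟪gradient (fun y => Ld (q k, y)) (q (k+1)) + fp k, ξ (q (k+1))⟫ := by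
    intro k hk
    have a := key (q k) (q (k+1))
    have b := horth k hk
    rw [inner_sub_left, inner_neg_left, inner_add_left]
    linarith
  have A : ∀ k < N, ⟪-gradient (fun x => Ld (x, q (k+1))) (q k) - fm k, ξ (q k)⟫
        = ⟪-gradient (fun x => Ld (x, q (0+1))) (q 0) - fm 0, ξ (q 0)⟫ := by
    intro k
    induction k with
    | zero => intro _; rfl
    | succ k ih =>
      intro hk
      rw [← ih (by omega), B k (by omega)]
      have e := hDEL (k+1) (by omega) hk
      rw [Nat.add_sub_cancel] at e
      congr 1
      rw [← sub_eq_zero, ← neg_eq_zero, ← e]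
      abel
  exact ⟨fun k hk l hl => (A k hk).trans (A l hl).symm, B⟩
end
end

section
/- Let h > 0, let L : ℝⁿ × ℝⁿ → ℝ be C², let f_L : ℝⁿ × ℝⁿ × ℝᵐ → ℝⁿ be continuous, and let u : [0,h] → ℝᵐ be continuous. Let V ⊆ ℝⁿ × ℝⁿ be open and let 𝒬 : V × [0,h] → ℝⁿ be C² such that for each (q₀,q₁) ∈ V, the curve t ↦ 𝒬(q₀,q₁,t) solves the forced Euler–Lagrange equations for (L, f_L, u) and satisfies 𝒬(q₀,q₁,0) = q₀ and 𝒬(q₀,q₁,h) = q₁. Define the exact discrete Lagrangian L_d^E(q₀,q₁) = ∫₀ʰ L(𝒬(q₀,q₁,t), 𝒬̇(q₀,q₁,t)) dt and the exact right discrete force f_d^{E−}(q₀,q₁) = ∫₀ʰ (∂𝒬/∂q₀(q₀,q₁,t))ᵀ · f_L(𝒬(q₀,q₁,t), 𝒬̇(q₀,q₁,t), u(t)) dt, where 𝒬̇ denotes ∂𝒬/∂t. Then for all (q₀,q₁) ∈ V: −D₁L_d^E(q₀,q₁) − f_d^{E−}(q₀,q₁) = D₂L(𝒬(q₀,q₁,0),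 𝒬̇(q₀,q₁,0)), i.e. the exact forced discrete Legendre transform 𝔽^{f−}L_d^E agrees with the continuous Legendre transform 𝔽L evaluated at the initial point of the solution curve. -/
open scoped RealInnerProductSpace

noncomputable section

theorem aux_param {H : Type*} [NormedAddCommGroup H] [NormedSpace ℝ H] [ProperSpace H]
    (F : H × ℝ → ℝ) (hF : ContDiff ℝ 1 F) (h : ℝ) (a : H) :
    HasFDerivAt (fun a => ∫ t in (0:ℝ)..h, F (a, t))
      (∫ t in (0:ℝ)..h, (fderiv ℝ F (a, t)).comp (ContinuousLinearMap.inl ℝ H ℝ)) a := by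
  have hc : Continuous (fun p : H × ℝ =>
      (fderiv ℝ F p).comp (ContinuousLinearMap.inl ℝ H ℝ)) :=
    (hF.continuous_fderiv one_ne_zero).clm_comp continuous_const
  have hK : IsCompact (Metric.closedBall a 1 ×ˢ Set.uIcc (0:ℝ) h) :=
    (isCompact_closedBall a 1).prod isCompact_uIcc
  obtain ⟨C, hC⟩ := hK.exists_bound_of_continuousOn hc.continuousOn
  refine intervalIntegral.hasFDerivAt_integral_of_dominated_of_fderiv_le
    (F' := fun a t => (fderiv ℝ F (a, t)).comp (ContinuousLinearMap.inl ℝ H ℝ))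
    (bound := fun _ => C)
    (Metric.closedBall_mem_nhds a one_pos) ?_ ?_ ?_ ?_ ?_ ?_
  · refine Filter.Eventually.of_forall fun x => ?_
    exact (hF.continuous.comp (by fun_prop : Continuous fun t : ℝ => (x, t))).aestronglyMeasurable
  · exact (hF.continuous.comp
      (by fun_prop : Continuous fun t : ℝ => (a, t))).intervalIntegrable _ _
  · exact (hc.comp (by fun_prop : Continuous fun t : ℝ => (a, t))).aestronglyMeasurable
  · refine Filter.Eventually.of_forall fun t ht x hx => ?_
    exact hC (x, t) ⟨hx, Set.uIoc_subset_uIcc ht⟩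
  · exact intervalIntegrable_const
  · refine Filter.Eventually.of_forall fun t ht x hx => ?_
    have h1 : HasFDerivAt F (fderiv ℝ F (x, t)) (x, t) :=
      (hF.differentiable one_ne_zero (x, t)).hasFDerivAt
    exact h1.comp x (hasFDerivAt_prodMk_left x t)

/-- The exact forced discrete Legendre transform `𝔽^{f−}L_d^E` agrees with the
continuous Legendre transform `𝔽L` at the initial point of the solution
curve. -/
theorem stmt_7 {n m : ℕ} (h : ℝ) (hh : 0 < h)
    (L : Evec n × Evec n → ℝ) (hL : ContDiff ℝ 2 L)
    (fL : Evec n × Evec n × Evec m → Evec n) (hfL : Continuous fL)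
    (u : ℝ → Evec m) (hu : Continuous u)
    (V : Set (Evec n × Evec n)) (hV : IsOpen V)
    (Qf : (Evec n × Evec n) × ℝ → Evec n) (hQf : ContDiff ℝ 2 Qf)
    (hbd0 : ∀ x ∈ V, Qf (x, 0) = x.1)
    (hbdh : ∀ x ∈ V, Qf (x, h) = x.2)
    (hEL : ∀ x ∈ V, ∀ t ∈ Set.Icc (0:ℝ) h,
      gradient (fun y => L (y, deriv (fun τ => Qf (x, τ)) t)) (Qf (x, t))
        - deriv (fun σ => gradient (fun v => L (Qf (x, σ), v))
            (deriv (fun τ => Qf (x, τ)) σ)) t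
        + fL (Qf (x, t), deriv (fun τ => Qf (x, τ)) t, u t) = 0)
    (LdE : Evec n × Evec n → ℝ)
    (hLdE : ∀ x, LdE x = ∫ t in (0:ℝ)..h, L (Qf (x, t), deriv (fun τ => Qf (x, τ)) t))
    (fdEm : Evec n × Evec n → Evec n)
    (hfdEm : ∀ x : Evec n × Evec n, fdEm x = ∫ t in (0:ℝ)..h,
      (ContinuousLinearMap.adjoint (fderiv ℝ (fun a => Qf ((a, x.2), t)) x.1))
        (fL (Qf (x, t), deriv (fun τ => Qf (x, τ)) t, u t))) :
    ∀ x ∈ V,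
      -gradient (fun a => LdE (a, x.2)) x.1 - fdEm x
        = gradient (fun v => L (Qf (x, 0), v)) (deriv (fun τ => Qf (x, τ)) 0) := by
  intro x hx
  obtain ⟨q0, q1⟩ := x
  have hQd : Differentiable ℝ Qf := hQf.differentiable two_ne_zero
  have hLd : Differentiable ℝ L := hL.differentiable two_ne_zero
  have hQ' : ContDiff ℝ 1 (fderiv ℝ Qf) := hQf.fderiv_right (by norm_num)
  have hL' : ContDiff ℝ 1 (fderiv ℝ L) := hL.fderiv_right (by norm_num)
  have hder : ∀ (x : Evec n × Evec n) (t : ℝ),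
      deriv (fun τ => Qf (x, τ)) t = fderiv ℝ Qf (x, t) (0, 1) := by
    intro x t
    have h1 : HasDerivAt (fun τ : ℝ => (x, τ)) ((0 : Evec n × Evec n), (1:ℝ)) t :=
      (hasDerivAt_const t x).prodMk (hasDerivAt_id t)
    exact ((hQd (x, t)).hasFDerivAt.comp_hasDerivAt t h1).deriv
  simp only [hder] at *
  have hg1 : ∀ (y v w : Evec n), inner ℝ (gradient (fun y => L (y, v)) y) w
      = fderiv ℝ L (y, v) (w, 0) := by
    intro y v w
    rw [inner_gradient_left]
    have := (HasFDerivAt.comp (f := fun y => (y, v)) (g := L) y (hLd (y, v)).hasFDerivAt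
      (hasFDerivAt_prodMk_left y v)).fderiv
    simp only [Function.comp_def] at this
    rw [this]; simp
  have hg2 : ∀ (y v : Evec n), gradient (fun v => L (y, v)) v
      = (InnerProductSpace.toDual ℝ (Evec n)).symm
        ((fderiv ℝ L (y, v)).comp (ContinuousLinearMap.inr ℝ (Evec n) (Evec n))) := by
    intro y v
    have := (HasFDerivAt.comp (f := fun v => (y, v)) (g := L) v (hLd (y, v)).hasFDerivAt
      (hasFDerivAt_prodMk_right y v)).fderiv
    simp only [Function.comp_def] at this
    rw [gradient, this]
  have hg2i : ∀ (y v w : Evec n), inner ℝ (gradient (fun v => L (y, v)) v) w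
      = fderiv ℝ L (y, v) (0, w) := by
    intro y v w
    rw [hg2]; simp
  -- the momentum
  set P : ℝ → Evec n := fun σ => gradient (fun v => L (Qf ((q0, q1), σ), v))
            (fderiv ℝ Qf ((q0, q1), σ) (0, 1)) with hP
  have hline : ContDiff ℝ 2 (fun σ : ℝ => ((q0, q1), σ)) := by fun_prop
  have hline1 : ContDiff ℝ 1 (fun σ : ℝ => ((q0, q1), σ)) := by fun_prop
  have hcQ : ContDiff ℝ 1 (fun σ : ℝ => Qf ((q0, q1), σ)) :=
    (hQf.of_le one_le_two).comp hline1
  have hcQ' : ContDiff ℝ 1 (fun σ : ℝ => fderiv ℝ Qf ((q0, q1), σ)) :=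
    hQ'.comp hline1
  have hPc : ContDiff ℝ 1 P := by
    simp only [hP, hg2]
    refine (InnerProductSpace.toDual ℝ (Evec n)).symm.toContinuousLinearEquiv.contDiff.comp ?_
    refine ContDiff.clm_comp ?_ contDiff_const
    exact hL'.comp (hcQ.prodMk (hcQ'.clm_apply contDiff_const))
  have hG : ContDiff ℝ 1 (fun p : Evec n × ℝ =>
      L (Qf ((p.1, q1), p.2), fderiv ℝ Qf ((p.1, q1), p.2) (0, 1))) := by
    have hi : ContDiff ℝ 1 (fun p : Evec n × ℝ => ((p.1, q1), p.2)) := by fun_prop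
    exact (hL.of_le one_le_two).comp
      (((hQf.of_le one_le_two).comp hi).prodMk ((hQ'.comp hi).clm_apply contDiff_const))
  have hpar := aux_param _ hG h q0
  have hfun : (fun a => LdE (a, q1)) = fun a => ∫ t in (0:ℝ)..h,
      L (Qf ((a, q1), t), fderiv ℝ Qf ((a, q1), t) (0, 1)) := by
    funext a; rw [hLdE]
  refine ext_inner_right ℝ fun w => ?_
  -- variation
  set D : ℝ → Evec n := fun t => fderiv ℝ Qf ((q0, q1), t) ((w, 0), 0) with hD
  have hDc : ContDiff ℝ 1 D := hcQ'.clm_apply contDiff_const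
  have hD' : ∀ t, deriv D t
      = fderiv ℝ (fderiv ℝ Qf) ((q0, q1), t) ((w, 0), 0) (0, 1) := by
    intro t
    have h1 : HasDerivAt (fun τ : ℝ => ((q0, q1), τ)) ((0 : Evec n × Evec n), (1:ℝ)) t :=
      (hasDerivAt_const t _).prodMk (hasDerivAt_id t)
    have h2 := ((hQ'.differentiable one_ne_zero
      ((q0, q1), t)).hasFDerivAt.comp_hasDerivAt t h1)
    have h3 := (h2.clm_apply (hasDerivAt_const t (((w, 0), 0) : (Evec n × Evec n) × ℝ))).deriv
    have hs : IsSymmSndFDerivAt ℝ Qf ((q0, q1), t) :=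
      hQf.contDiffAt.isSymmSndFDerivAt (by simp)
    rw [hs.eq]
    simpa [hD, Function.comp_def] using h3
  have hiP : ∀ t : ℝ, HasFDerivAt (fun a : Evec n => ((a, q1), t))
      ((ContinuousLinearMap.inl ℝ (Evec n × Evec n) ℝ).comp
        (ContinuousLinearMap.inl ℝ (Evec n) (Evec n))) q0 := fun t =>
    HasFDerivAt.comp (f := fun a => (a, q1)) (g := fun z : Evec n × Evec n => (z, t)) q0
      (hasFDerivAt_prodMk_left (𝕜 := ℝ) (q0, q1) t) (hasFDerivAt_prodMk_left q0 q1)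
  have hQa : ∀ t : ℝ, HasFDerivAt (fun a : Evec n => Qf ((a, q1), t))
      ((fderiv ℝ Qf ((q0, q1), t)).comp ((ContinuousLinearMap.inl ℝ (Evec n × Evec n) ℝ).comp
        (ContinuousLinearMap.inl ℝ (Evec n) (Evec n)))) q0 := fun t =>
    (hQd ((q0, q1), t)).hasFDerivAt.comp q0 (hiP t)
  have hQ'a : ∀ t : ℝ, HasFDerivAt (fun a : Evec n => fderiv ℝ Qf ((a, q1), t))
      ((fderiv ℝ (fderiv ℝ Qf) ((q0, q1), t)).comp
        ((ContinuousLinearMap.inl ℝ (Evec n × Evec n) ℝ).comp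
        (ContinuousLinearMap.inl ℝ (Evec n) (Evec n)))) q0 := fun t =>
    (hQ'.differentiable one_ne_zero ((q0, q1), t)).hasFDerivAt.comp q0 (hiP t)
  have hnear : ∀ᶠ a in nhds q0, (a, q1) ∈ V :=
    (by fun_prop : Continuous fun a : Evec n => (a, q1)).continuousAt.eventually
      (hV.mem_nhds hx)
  have hD0 : D 0 = w := by
    have h1 : HasFDerivAt (fun a : Evec n => Qf ((a, q1), 0))
        (ContinuousLinearMap.id ℝ (Evec n)) q0 :=
      (hasFDerivAt_id q0).congr_of_eventuallyEq
        (hnear.mono fun a ha => hbd0 _ ha)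
    have := congrArg (fun T => T w) ((hQa 0).unique h1)
    simpa [hD] using this
  have hDh : D h = 0 := by
    have h1 : HasFDerivAt (fun a : Evec n => Qf ((a, q1), h))
        (0 : Evec n →L[ℝ] Evec n) q0 :=
      (hasFDerivAt_const q1 q0).congr_of_eventuallyEq
        (hnear.mono fun a ha => hbdh _ ha)
    have := congrArg (fun T => T w) ((hQa h).unique h1)
    simpa [hD] using this
  set f : ℝ → Evec n := fun t =>
    fL (Qf ((q0, q1), t), fderiv ℝ Qf ((q0, q1), t) (0, 1), u t) with hf
  have hfc : Continuous f := hfL.comp (hcQ.continuous.prodMk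
    ((hcQ'.clm_apply contDiff_const).continuous.prodMk hu))
  -- derivative of the action
  have hcint : Continuous fun t : ℝ => (fderiv ℝ (fun p : Evec n × ℝ =>
      L (Qf ((p.1, q1), p.2), fderiv ℝ Qf ((p.1, q1), p.2) (0, 1))) (q0, t)).comp
        (ContinuousLinearMap.inl ℝ (Evec n) ℝ) :=
    ((hG.continuous_fderiv one_ne_zero).comp
      (by fun_prop : Continuous fun t : ℝ => (q0, t))).clm_comp continuous_const
  have hA : inner ℝ (gradient (fun a => LdE (a, q1)) q0) w
      = ∫ t in (0:ℝ)..h, (inner ℝ (P t) (deriv D t) + inner ℝ (deriv P t) (D t)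
        - inner ℝ (f t) (D t)) := by
    rw [inner_gradient_left, hfun, hpar.fderiv,
      ContinuousLinearMap.intervalIntegral_apply (hcint.intervalIntegrable _ _)]
    refine intervalIntegral.integral_congr fun t ht => ?_
    rw [Set.uIcc_of_le hh.le] at ht
    have h1 : HasFDerivAt (fun a : Evec n =>
        L (Qf ((a, q1), t), fderiv ℝ Qf ((a, q1), t) (0, 1))) _ q0 :=
      (hLd (Qf ((q0, q1), t), fderiv ℝ Qf ((q0, q1), t) (0, 1))).hasFDerivAt.comp q0
        ((hQa t).prodMk ((hQ'a t).clm_apply (hasFDerivAt_const _ _)))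
    have h2 : HasFDerivAt (fun a : Evec n =>
        L (Qf ((a, q1), t), fderiv ℝ Qf ((a, q1), t) (0, 1))) _ q0 :=
      HasFDerivAt.comp (f := fun a => (a, t)) (g := fun p : Evec n × ℝ =>
        L (Qf ((p.1, q1), p.2), fderiv ℝ Qf ((p.1, q1), p.2) (0, 1))) q0
        (hG.differentiable one_ne_zero (q0, t)).hasFDerivAt
        (hasFDerivAt_prodMk_left q0 t)
    have h3 := congrArg (fun T => T w) (h2.unique h1)
    have h4 := hEL _ hx t ht
    have h5 := congrArg (fun z => inner ℝ z (D t)) h4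
    simp only [inner_add_left, inner_sub_left, inner_zero_left, hg1] at h5
    have h6 : inner ℝ (P t) (deriv D t) = _ := hg2i _ _ _
    have h7 : fderiv ℝ L (Qf ((q0, q1), t), fderiv ℝ Qf ((q0, q1), t) (0, 1))
        (D t, deriv D t) = fderiv ℝ L (Qf ((q0, q1), t), fderiv ℝ Qf ((q0, q1), t) (0, 1))
        (D t, 0) + fderiv ℝ L (Qf ((q0, q1), t), fderiv ℝ Qf ((q0, q1), t) (0, 1))
        (0, deriv D t) := by
      rw [← map_add]; simp
    refine h3.trans ?_
    rw [h6]
    have h8 : inner ℝ (deriv P t) (D t) - inner ℝ (f t) (D t)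
      = fderiv ℝ L (Qf ((q0, q1), t), fderiv ℝ Qf ((q0, q1), t) (0, 1)) (D t, 0) := by
      linarith
    rw [add_sub_assoc, h8]
    refine Eq.trans ?_ (h7.trans (add_comm _ _))
    rw [hD']
    simp [hD]
  have hB : inner ℝ (fdEm (q0, q1)) w = ∫ t in (0:ℝ)..h, inner ℝ (f t) (D t) := by
    have hadj : Continuous fun t : ℝ =>
        (ContinuousLinearMap.adjoint (fderiv ℝ (fun a => Qf ((a, q1), t)) q0)) (f t) := by
      have : (fun t : ℝ => fderiv ℝ (fun a => Qf ((a, q1), t)) q0) = fun t => _ :=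
        funext fun t => (hQa t).fderiv
      have hc : Continuous fun t : ℝ => fderiv ℝ (fun a => Qf ((a, q1), t)) q0 := by
        rw [this]
        exact hcQ'.continuous.clm_comp continuous_const
      exact (ContinuousLinearMap.adjoint.continuous.comp hc).clm_apply hfc
    have h1 := (innerSL ℝ w).intervalIntegral_comp_comm 
      (hadj.intervalIntegrable (μ := MeasureTheory.volume) 0 h)
    rw [hfdEm, real_inner_comm]
    refine Eq.trans h1.symm ?_
    refine intervalIntegral.integral_congr fun t ht => ?_
    simp only [innerSL_apply_apply]
    rw [ContinuousLinearMap.adjoint_inner_right, (hQa t).fderiv, real_inner_comm]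
    simp [hD]
  have hPd : ∀ t, HasDerivAt P (deriv P t) t := fun t =>
    (hPc.differentiable one_ne_zero t).hasDerivAt
  have hDd : ∀ t, HasDerivAt D (deriv D t) t := fun t =>
    (hDc.differentiable one_ne_zero t).hasDerivAt
  have hcc : Continuous fun t => inner ℝ (P t) (deriv D t) + inner ℝ (deriv P t) (D t) :=
    (hPc.continuous.inner (hDc.continuous_deriv le_rfl)).add
      ((hPc.continuous_deriv le_rfl).inner hDc.continuous)
  have hI : ∫ t in (0:ℝ)..h, (inner ℝ (P t) (deriv D t) + inner ℝ (deriv P t) (D t))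
      = inner ℝ (P h) (D h) - inner ℝ (P 0) (D 0) :=
    intervalIntegral.integral_eq_sub_of_hasDerivAt (f := fun t => inner ℝ (P t) (D t))
      (fun t _ => (hPd t).inner ℝ (hDd t)) (hcc.intervalIntegrable _ _)
  rw [intervalIntegral.integral_sub (hcc.intervalIntegrable _ _)
    ((hfc.inner hDc.continuous).intervalIntegrable _ _), hI, ← hB, hDh, hD0,
    inner_zero_right] at hA
  rw [inner_sub_left, inner_neg_left]
  have : inner ℝ (P 0) w = - inner ℝ (gradient (fun a => LdE (a, q1)) q0) w
      - inner ℝ (fdEm (q0, q1)) w := by linarith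
  exact this.symm
end
end

section
/- (Karush–Kuhn–Tucker conditions.) Let φ : ℝⁿ → ℝ, a : ℝⁿ → ℝᵐ, b : ℝⁿ → ℝᵖ be continuously differentiable, and let ξ* ∈ ℝⁿ be a local minimum of φ on the feasible set {ξ : a(ξ) = 0, b(ξ) ≥ 0}. Suppose ξ* is a regular point: the gradients ∇a_i(ξ*) for i = 1, …, m, together with the gradients ∇b_j(ξ*) for those j with b_j(ξ*) = 0 (the active inequality constraints), are linearly independent. Then there exist unique Lagrange multiplier vectors λ* ∈ ℝᵐ and μ* ∈ ℝᵖ such that ∇φ(ξ*) − Σ_{i=1}^{m} λ*_i ∇a_i(ξ*) − Σ_{j=1}^{p} μ*_j ∇b_j(ξ*) = 0, a(ξ*) = 0, b(ξ*) ≥ 0, μ* ≥ 0, and μ*_j b_j(ξ*) = 0 for j = 1, …, p. -/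
open scoped RealInnerProductSpace

noncomputable section

open scoped RealInnerProductSpace Topology
open Filter

lemma kkt_surj {E ι : Type*} [NormedAddCommGroup E] [NormedSpace ℝ E] [Fintype ι]
    (f' : ι → StrongDual ℝ E) (h : LinearIndependent ℝ f') :
    Function.Surjective (ContinuousLinearMap.pi f' : E →L[ℝ] (ι → ℝ)) := by
  classical
  by_contra hs
  have h1 : (ContinuousLinearMap.pi f' : E →L[ℝ] (ι → ℝ)).range < ⊤ := by
    rw [lt_top_iff_ne_top]
    intro h2
    exact hs (LinearMap.range_eq_top.1 h2)
  obtain ⟨L, hL0, hL⟩ := Submodule.exists_le_ker_of_lt_top _ h1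
  apply hL0
  have hz : ∑ i, L (Pi.single i 1) • f' i = 0 := by
    ext x
    have h3 : L (fun i => f' i x) = 0 := hL ⟨x, rfl⟩
    have h4 : (fun i => f' i x) = ∑ i, f' i x • (Pi.single i (1:ℝ) : ι → ℝ) := by
      ext j; simp [Finset.sum_apply, Pi.single_apply]
    rw [h4, map_sum] at h3
    simp only [map_smul, smul_eq_mul] at h3
    rw [ContinuousLinearMap.sum_apply]
    simp only [ContinuousLinearMap.smul_apply, smul_eq_mul, ContinuousLinearMap.zero_apply]
    rw [← h3]
    exact Finset.sum_congr rfl fun i _ => mul_comm _ _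
  have hc := Fintype.linearIndependent_iff.1 h _ hz
  apply LinearMap.pi_ext'
  intro i
  ext
  simpa using hc i

lemma kkt_curve {E ι : Type*} [NormedAddCommGroup E] [NormedSpace ℝ E] [Fintype ι]
    [DecidableEq ι] (φ : E → ℝ) (φ' : StrongDual ℝ E)
    (f : ι → E → ℝ) (f' : ι → StrongDual ℝ E) (ξ : E)
    (hf : ∀ i, HasStrictFDerivAt (f i) (f' i) ξ) (hφ : HasFDerivAt φ φ' ξ)
    (h : LinearIndependent ℝ f') (c : ι → ℝ) (hc : φ' = ∑ i, c i • f' i) (k : ι) :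
    ∃ x : ℝ → E, x 0 = ξ ∧ ContinuousAt x 0 ∧
      (∀ᶠ t in 𝓝 (0:ℝ), ∀ i, f i (x t) = f i ξ + t * (Pi.single k (1:ℝ) : ι → ℝ) i) ∧
      HasDerivAt (fun t => φ (x t)) (c k) 0 := by
  obtain ⟨R, hR⟩ := LinearMap.exists_rightInverse_of_surjective
    ((ContinuousLinearMap.pi f' : E →L[ℝ] (ι → ℝ)) : E →ₗ[ℝ] (ι → ℝ))
    (LinearMap.range_eq_top.2 (kkt_surj f' h))
  let R' : (ι → ℝ) →L[ℝ] E := LinearMap.toContinuousLinearMap R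
  have hR' : ∀ y i, f' i (R' y) = y i := fun y i => congrFun (LinearMap.congr_fun hR y) i
  let F : (ι → ℝ) → (ι → ℝ) := fun y i => f i (ξ + R' y)
  have hF : HasStrictFDerivAt F
      ((ContinuousLinearEquiv.refl ℝ (ι → ℝ) : (ι → ℝ) ≃L[ℝ] (ι → ℝ)) : (ι → ℝ) →L[ℝ] (ι → ℝ)) 0 := by
    rw [hasStrictFDerivAt_pi']
    intro i
    have h1 : HasStrictFDerivAt (fun y => ξ + R' y) R' 0 := R'.hasStrictFDerivAt.const_add ξ
    have h2 : HasStrictFDerivAt (f i) (f' i) (ξ + R' 0) := by simpa using hf i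
    have h3 := h2.comp 0 h1
    convert h3 using 1
    ext y
    simp [hR']
  let G := hF.localInverse F _ 0
  have hG := hF.to_localInverse
  have hG0 : G (F 0) = 0 := hF.localInverse_apply_image
  have hGr : ∀ᶠ y in 𝓝 (F 0), F (G y) = y := hF.eventually_right_inverse
  let γ : ℝ → (ι → ℝ) := fun t => F 0 + t • Pi.single k (1:ℝ)
  have hγ : HasDerivAt γ (Pi.single k (1:ℝ)) 0 := by
    have := ((hasDerivAt_id (0:ℝ)).smul_const (Pi.single k (1:ℝ) : ι → ℝ)).const_add (F 0)
    rw [one_smul] at this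
    exact this
  have hγ0 : γ 0 = F 0 := by simp [γ]
  have hGγ : HasDerivAt (fun t => G (γ t)) (Pi.single k (1:ℝ)) 0 := by
    have h1 : HasFDerivAt G (ContinuousLinearMap.id ℝ (ι → ℝ)) (γ 0) := by
      rw [hγ0]; exact hG.hasFDerivAt
    exact h1.comp_hasDerivAt 0 hγ
  have hx : HasDerivAt (fun t => ξ + R' (G (γ t))) (R' (Pi.single k (1:ℝ))) 0 :=
    (R'.hasFDerivAt.comp_hasDerivAt 0 hGγ).const_add ξ
  have hx0 : ξ + R' (G (γ 0)) = ξ := by rw [hγ0, hG0]; simp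
  refine ⟨fun t => ξ + R' (G (γ t)), hx0, hx.continuousAt, ?_, ?_⟩
  · have h1 : Tendsto γ (𝓝 0) (𝓝 (F 0)) := hγ0 ▸ hγ.continuousAt
    filter_upwards [h1.eventually hGr] with t ht i
    have := congrFun ht i
    simpa [F, γ] using this
  · have h1 : HasFDerivAt φ φ' (ξ + R' (G (γ 0))) := by rw [hx0]; exact hφ
    have h2 := h1.comp_hasDerivAt 0 hx
    have h3 : φ' (R' (Pi.single k (1:ℝ))) = c k := by
      rw [hc]
      simp [hR', Pi.single_apply]
    rw [h3] at h2
    exact h2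

lemma kkt_deriv_nonneg (h : ℝ → ℝ) (c : ℝ) (hd : HasDerivAt h c 0)
    (hm : ∀ᶠ t in 𝓝[>] (0:ℝ), h 0 ≤ h t) : 0 ≤ c := by
  have h1 := (hasDerivAt_iff_tendsto_slope.1 hd).mono_left
    (nhdsWithin_mono (0:ℝ) (fun t (ht : t ∈ Set.Ioi (0:ℝ)) => ne_of_gt ht))
  refine ge_of_tendsto h1 ?_
  filter_upwards [hm, self_mem_nhdsWithin] with t ht ht0
  rw [slope_def_field]
  have : (0:ℝ) < t := ht0
  apply div_nonneg <;> linarith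

lemma kkt_sum {p : ℕ} {V : Type*} [AddCommGroup V] [Module ℝ V] (β μ : Fin p → ℝ) (g : Fin p → V)
    (h : ∀ j, μ j * β j = 0) :
    ∑ j, μ j • g j = ∑ j : {j : Fin p // β j = 0}, μ j.1 • g j.1 := by
  classical
  · refine (Finset.sum_subset (Finset.filter_subset (fun j => β j = 0) _) ?_).symm.trans ?_
    · intro j _ hj
      have : μ j = 0 := by
        rcases mul_eq_zero.1 (h j) with h | h
        · exact h
        · exact absurd (by simpa using h) hj
      simp [this]
    · exact Finset.sum_subtype _ (by simp) _

/-- Karush–Kuhn–Tucker conditions: at a regular local minimum of a nonlinear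
program there exist unique Lagrange multipliers satisfying stationarity,
feasibility, nonnegativity and complementary slackness. -/
theorem stmt_10 {n m p : ℕ}
    (φ : Evec n → ℝ) (a : Evec n → Evec m) (b : Evec n → Evec p)
    (hφ : ContDiff ℝ 1 φ) (ha : ContDiff ℝ 1 a) (hb : ContDiff ℝ 1 b)
    (ξ : Evec n)
    (hfeas : a ξ = 0 ∧ ∀ j, 0 ≤ b ξ j)
    (hmin : IsLocalMinOn φ {x | a x = 0 ∧ ∀ j, 0 ≤ b x j} ξ)
    (hreg : LinearIndependent ℝ
      (Sum.elim (fun i : Fin m => gradient (fun x => a x i) ξ)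
        (fun j : {j : Fin p // b ξ j = 0} => gradient (fun x => b x j.1) ξ))) :
    ∃! lm : (Fin m → ℝ) × (Fin p → ℝ),
      gradient φ ξ - (∑ i, lm.1 i • gradient (fun x => a x i) ξ)
          - (∑ j, lm.2 j • gradient (fun x => b x j) ξ) = 0
        ∧ a ξ = 0
        ∧ (∀ j, 0 ≤ b ξ j)
        ∧ (∀ j, 0 ≤ lm.2 j)
        ∧ (∀ j, lm.2 j * b ξ j = 0) := by
  classical
  let ι := Fin m ⊕ {j : Fin p // b ξ j = 0}
  let f : ι → Evec n → ℝ := Sum.elim (fun i x => a x i) (fun j x => b x j.1)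
  let f' : ι → StrongDual ℝ (Evec n) := fun k => fderiv ℝ (f k) ξ
  have haC : ∀ i, ContDiff ℝ 1 (fun x => a x i) := fun i => by fun_prop
  have hbC : ∀ j, ContDiff ℝ 1 (fun x => b x j) := fun i => by fun_prop
  have hf : ∀ k, HasStrictFDerivAt (f k) (f' k) ξ := by
    rintro (i | j)
    · exact (haC i).contDiffAt.hasStrictFDerivAt (by simp)
    · exact (hbC j.1).contDiffAt.hasStrictFDerivAt (by simp)
  have hφ' : HasStrictFDerivAt φ (fderiv ℝ φ ξ) ξ := hφ.contDiffAt.hasStrictFDerivAt (by simp)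
  have hf0 : ∀ k, f k ξ = 0 := by
    rintro (i | j)
    · simp [f, hfeas.1]
    · exact j.2
  have hind : LinearIndependent ℝ f' := by
    rw [Fintype.linearIndependent_iff] at hreg ⊢
    intro g hg
    apply hreg g
    have h1 := congrArg (InnerProductSpace.toDual ℝ (Evec n)).symm hg
    rw [map_sum, map_zero] at h1
    simp only [map_smul] at h1
    rw [← h1]
    refine Finset.sum_congr rfl fun k _ => ?_
    rcases k with i | j <;> rfl
  -- inactive constraints stay positive
  have hinact : ∀ᶠ x in 𝓝 ξ, ∀ j, b ξ j ≠ 0 → 0 ≤ b x j := by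
    rw [eventually_all]
    intro j
    by_cases hj : b ξ j = 0
    · simp [hj]
    · have : 0 < b ξ j := lt_of_le_of_ne (hfeas.2 j) (Ne.symm hj)
      filter_upwards [(hbC j).continuous.continuousAt.eventually (lt_mem_nhds this)] with x hx _
      exact hx.le
  have hmin' : ∀ᶠ x in 𝓝 ξ, (a x = 0 ∧ ∀ j, 0 ≤ b x j) → φ ξ ≤ φ x :=
    eventually_nhdsWithin_iff.1 hmin
  have hmin2 : ∀ᶠ x in 𝓝 ξ, (∀ i, a x i = 0) → (∀ j, b ξ j = 0 → 0 ≤ b x j) → φ ξ ≤ φ x := by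
    filter_upwards [hinact, hmin'] with x h1 h2 h3 h4
    refine h2 ⟨by ext i; exact h3 i, fun j => ?_⟩
    by_cases hj : b ξ j = 0
    · exact h4 j hj
    · exact h1 j hj
  have hextr : IsLocalExtrOn φ {x | ∀ i, f i x = f i ξ} ξ := by
    left
    refine eventually_nhdsWithin_iff.2 ?_
    filter_upwards [hmin2] with x hx hxf
    have hxf : ∀ k, f k x = 0 := fun k => (hxf k).trans (hf0 k)
    exact hx (fun i => hxf (Sum.inl i)) (fun j hj => (hxf (Sum.inr ⟨j, hj⟩)).ge)
  obtain ⟨Λ, Λ₀, hne, hsum⟩ := hextr.exists_multipliers_of_hasStrictFDerivAt hf hφ'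
  have hΛ₀ : Λ₀ ≠ 0 := by
    rintro rfl
    apply hne
    have := Fintype.linearIndependent_iff.1 hind Λ (by simpa using hsum)
    ext k
    · exact this k
    · rfl
  obtain ⟨c, hc⟩ : ∃ c : ι → ℝ, fderiv ℝ φ ξ = ∑ k, c k • f' k := by
    refine ⟨fun k => -(Λ₀⁻¹ * Λ k), ?_⟩
    have h1 : Λ₀ • fderiv ℝ φ ξ = -∑ k, Λ k • f' k := by
      rw [eq_neg_iff_add_eq_zero, add_comm]; exact hsum
    calc fderiv ℝ φ ξ = Λ₀⁻¹ • (Λ₀ • fderiv ℝ φ ξ) := by rw [smul_smul, inv_mul_cancel₀ hΛ₀, one_smul]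
      _ = _ := by
        rw [h1, smul_neg, Finset.smul_sum, ← Finset.sum_neg_distrib]
        refine Finset.sum_congr rfl fun k _ => ?_
        rw [smul_smul]
        exact (neg_smul _ _).symm
  have hpos : ∀ j : {j : Fin p // b ξ j = 0}, 0 ≤ c (Sum.inr j) := by
    intro j
    obtain ⟨x, hx0, hxc, hxf, hxd⟩ := kkt_curve φ _ f f' ξ hf hφ'.hasFDerivAt hind c hc (Sum.inr j)
    refine kkt_deriv_nonneg _ _ hxd ?_
    have hxt : Tendsto x (𝓝 0) (𝓝 ξ) := by
      have := hxc.tendsto; rwa [hx0] at this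
    filter_upwards [(hxt.eventually hmin2).filter_mono nhdsWithin_le_nhds,
      hxf.filter_mono nhdsWithin_le_nhds, self_mem_nhdsWithin] with t h1 h2 h3
    have ht : (0:ℝ) < t := h3
    simp only [hf0, zero_add] at h2
    rw [hx0]
    refine h1 (fun i => ?_) (fun j' hj' => ?_)
    · simpa [f] using h2 (Sum.inl i)
    · have h4 : b (x t) j' = _ := h2 (Sum.inr ⟨j', hj'⟩)
      rw [h4, Pi.single_apply]
      split_ifs <;> simp [ht.le]
  have hgrad : gradient φ ξ = ∑ i, c (Sum.inl i) • gradient (fun x => a x i) ξ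
      + ∑ j : {j : Fin p // b ξ j = 0}, c (Sum.inr j) • gradient (fun x => b x j.1) ξ := by
    unfold gradient
    rw [hc, Fintype.sum_sum_type, map_add, map_sum, map_sum]
    simp only [map_smul]
    rfl
  refine ⟨(fun i => c (Sum.inl i), fun j => if h : b ξ j = 0 then c (Sum.inr ⟨j, h⟩) else 0),
    ⟨?_, hfeas.1, hfeas.2, ?_, ?_⟩, ?_⟩
  · dsimp only
    rw [kkt_sum (fun j => b ξ j), hgrad]
    · have : ∀ j : {j : Fin p // b ξ j = 0}, (if h : b ξ j.1 = 0 then c (Sum.inr ⟨j.1, h⟩) else 0)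
          = c (Sum.inr j) := fun j => by rw [dif_pos j.2]
      simp only [this]
      abel
    · intro j
      by_cases h : b ξ j = 0 <;> simp [h]
  · intro j
    dsimp only
    split_ifs with h
    · exact hpos _
    · exact le_rfl
  · intro j
    by_cases h : b ξ j = 0 <;> simp [h]
  · rintro ⟨l, μ⟩ ⟨h1, -, -, -, h5⟩
    dsimp only at h1 h5
    rw [kkt_sum (fun j => b ξ j) μ _ h5, hgrad] at h1
    have h6 := Fintype.linearIndependent_iff.1 hreg
      (Sum.elim (fun i => c (Sum.inl i) - l i) (fun j => c (Sum.inr j) - μ j.1)) (by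
        rw [Fintype.sum_sum_type]
        simp only [Sum.elim_inl, Sum.elim_inr, sub_smul, Finset.sum_sub_distrib]
        rw [← h1]; abel)
    refine Prod.ext ?_ ?_
    · funext i
      have := h6 (Sum.inl i)
      simp only [Sum.elim_inl] at this
      show l i = c (Sum.inl i)
      linarith
    · funext j
      show μ j = if h : b ξ j = 0 then c (Sum.inr ⟨j, h⟩) else 0
      split_ifs with h
      · have := h6 (Sum.inr ⟨j, h⟩)
        simp only [Sum.elim_inr] at this
        linarith
      · exact (mul_eq_zero.1 (h5 j)).resolve_right h
end
end

section
/- Let h > 0, let L : ℝⁿ × ℝⁿ → ℝ be C¹, let f_L : ℝⁿ × ℝⁿ × ℝᵐ → ℝⁿ be continuous, and fix controls U₁, …, U_s ∈ ℝᵐ. Let coefficients b_i, a_{ij}, b̃_i, ã_{ij} (i, j = 1, …, s) satisfy the symplecticity conditions b_i ã_{ij} + b̃_j a_{ji} = b_i b̃_j and b_i = b̃_i for all i, j. Let V ⊆ ℝⁿ × ℝⁿ be open and suppose there are C¹ functions (q₀,q₁) ↦ (Q_i, Q̇_i, P_i, Ṗ_i, p₀, p₁) on V, i = 1, …, s, satisfying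 the partitioned Runge–Kutta relations: q₁ = q₀ + h Σ_j b_j Q̇_j, Q_i = q₀ + h Σ_j a_{ij} Q̇_j, P_i = D₂L(Q_i, Q̇_i), p₁ = p₀ + h Σ_j b̃_j Ṗ_j, P_i = p₀ + h Σ_j ã_{ij} Ṗ_j, and Ṗ_i = D₁L(Q_i, Q̇_i) + f_L(Q_i, Q̇_i, U_i). Define on V the discrete Lagrangian L_d(q₀,q₁) = h Σ_i b_i L(Q_i(q₀,q₁), Q̇_i(q₀,q₁)) and discrete forces f_d⁺(q₀,q₁) = h Σ_i b_i (∂Q_i/∂q₁)ᵀ · f_L(Q_i, Q̇_i, U_i) and f_d⁻(q₀,q₁) = h Σ_i b_i (∂Q_i/∂q₀)ᵀ · f_L(Q_i, Q̇_i, U_i). Then for all (q₀,q₁) ∈ V: p₀(q₀,q₁) = −D₁L_d(q₀,q₁) − f_d⁻(q₀,q₁) and p₁(q₀,q₁) = D₂L_d(q₀,q₁) + f_d⁺(q₀,q₁); that is, the forced discrete Hamiltonian map generated by (L_d, f_d^±) is exactly the map (q₀,p₀) ↦ (q₁,p₁) of the symplectic partitioned Runge–Kutta method for the forced system. -/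
open scoped RealInnerProductSpace

noncomputable section

theorem core_alg {E : Type*} [NormedAddCommGroup E] [InnerProductSpace ℝ E] (h : ℝ) (s : ℕ)
    (b bt : Fin s → ℝ) (aa ta : Fin s → Fin s → ℝ)
    (hsymp : ∀ i j, b i * ta i j + bt j * aa j i = b i * bt j)
    (hbbt : ∀ i, b i = bt i) (u v p0 p1 : E) (dQ dQd P Pd : Fin s → E)
    (h1 : v = u + h • ∑ j, b j • dQd j)
    (h2 : ∀ i, dQ i = u + h • ∑ j, aa i j • dQd j)
    (h3 : p1 = p0 + h • ∑ j, bt j • Pd j)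
    (h4 : ∀ i, P i = p0 + h • ∑ j, ta i j • Pd j) :
    h * ∑ i, b i * (inner ℝ (Pd i) (dQ i) + inner ℝ (P i) (dQd i))
      = inner ℝ p1 v - inner ℝ p0 u := by
  have e1 : ∀ i, inner ℝ (Pd i) (dQ i)
      = inner ℝ (Pd i) u + h * ∑ j, aa i j * inner ℝ (Pd i) (dQd j) := by
    intro i
    rw [h2 i, inner_add_right, inner_smul_right, inner_sum]
    simp only [inner_smul_right]
  have e2 : ∀ i, inner ℝ (P i) (dQd i)
      = inner ℝ p0 (dQd i) + h * ∑ j, ta i j * inner ℝ (Pd j) (dQd i) := by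
    intro i
    rw [h4 i, inner_add_left, real_inner_smul_left, sum_inner]
    simp only [real_inner_smul_left]
  have e3 : inner ℝ p1 v = inner ℝ p0 u + h * ∑ i, b i * inner ℝ p0 (dQd i)
      + h * ∑ i, b i * inner ℝ (Pd i) u
      + h * (h * ∑ i, ∑ j, b i * bt j * inner ℝ (Pd j) (dQd i)) := by
    have k1 : inner ℝ p0 (∑ j, b j • dQd j) = ∑ i, b i * inner ℝ p0 (dQd i) := by
      rw [inner_sum]
      simp only [inner_smul_right]
    have k2 : inner ℝ (∑ j, bt j • Pd j) u = ∑ i, b i * inner ℝ (Pd i) u := by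
      rw [sum_inner]
      simp only [real_inner_smul_left, hbbt]
    have k3 : inner ℝ (∑ j, bt j • Pd j) (∑ j, b j • dQd j)
        = ∑ i, ∑ j, b i * bt j * inner ℝ (Pd j) (dQd i) := by
      rw [inner_sum]
      refine Finset.sum_congr rfl fun i _ => ?_
      rw [inner_smul_right, sum_inner, Finset.mul_sum]
      refine Finset.sum_congr rfl fun j _ => ?_
      rw [real_inner_smul_left]
      ring
    rw [h3, h1]
    simp only [inner_add_left, inner_add_right, real_inner_smul_left, inner_smul_right,
      k1, k2, k3]
    ring
  have e4 : ∑ i, ∑ j, b i * bt j * inner ℝ (Pd j) (dQd i)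
      = ∑ i, ∑ j, b i * ta i j * inner ℝ (Pd j) (dQd i)
        + ∑ i, ∑ j, b i * aa i j * inner ℝ (Pd i) (dQd j) := by
    rw [Finset.sum_comm (f := fun i j => b i * aa i j * inner ℝ (Pd i) (dQd j)),
      ← Finset.sum_add_distrib]
    refine Finset.sum_congr rfl fun i _ => ?_
    rw [← Finset.sum_add_distrib]
    refine Finset.sum_congr rfl fun j _ => ?_
    rw [← hsymp, ← hbbt j]
    ring
  rw [e3, e4]
  simp only [e1, e2, mul_add, Finset.sum_add_distrib, Finset.mul_sum]
  have c1 : ∀ (w : Fin s → Fin s → ℝ) (z : Fin s → Fin s → ℝ),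
    ∑ i, ∑ j, h * (b i * (h * (w i j * z i j))) = ∑ i, ∑ j, h * (h * (b i * w i j * z i j)) := by
    intro w z
    refine Finset.sum_congr rfl fun i _ => Finset.sum_congr rfl fun j _ => ?_
    ring
  rw [c1 aa (fun i j => inner ℝ (Pd i) (dQd j)), c1 ta (fun i j => inner ℝ (Pd j) (dQd i))]
  ring

theorem inner_grad {E : Type*} [NormedAddCommGroup E] [InnerProductSpace ℝ E] [CompleteSpace E]
    (f : E → ℝ) (x y : E) : inner ℝ (gradient f x) y = fderiv ℝ f x y := by
  simp [gradient]

/-- The forced discrete Hamiltonian map generated by the discrete Lagrangian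
and discrete forces built from a symplectic partitioned Runge–Kutta scheme is
exactly the map `(q₀,p₀) ↦ (q₁,p₁)` of that Runge–Kutta method applied to the
forced system. -/
theorem stmt_15 {n m : ℕ} (h : ℝ) (hh : 0 < h)
    (L : Evec n × Evec n → ℝ) (hL : ContDiff ℝ 1 L)
    (fL : Evec n × Evec n × Evec m → Evec n) (hfL : Continuous fL)
    (s : ℕ) (U : Fin s → Evec m)
    (b bt : Fin s → ℝ) (aa ta : Fin s → Fin s → ℝ)
    (hsymp : ∀ i j, b i * ta i j + bt j * aa j i = b i * bt j)
    (hbbt : ∀ i, b i = bt i)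
    (V : Set (Evec n × Evec n)) (hV : IsOpen V)
    (Q Qd P Pd : Fin s → Evec n × Evec n → Evec n)
    (p0 p1 : Evec n × Evec n → Evec n)
    (hQreg : ∀ i, ContDiffOn ℝ 1 (Q i) V) (hQdreg : ∀ i, ContDiffOn ℝ 1 (Qd i) V)
    (hPreg : ∀ i, ContDiffOn ℝ 1 (P i) V) (hPdreg : ∀ i, ContDiffOn ℝ 1 (Pd i) V)
    (hp0reg : ContDiffOn ℝ 1 p0 V) (hp1reg : ContDiffOn ℝ 1 p1 V)
    (hq1 : ∀ x ∈ V, x.2 = x.1 + h • ∑ j, b j • Qd j x)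
    (hQi : ∀ x ∈ V, ∀ i, Q i x = x.1 + h • ∑ j, aa i j • Qd j x)
    (hPi : ∀ x ∈ V, ∀ i, P i x = gradient (fun v => L (Q i x, v)) (Qd i x))
    (hp1e : ∀ x ∈ V, p1 x = p0 x + h • ∑ j, bt j • Pd j x)
    (hPi2 : ∀ x ∈ V, ∀ i, P i x = p0 x + h • ∑ j, ta i j • Pd j x)
    (hPdi : ∀ x ∈ V, ∀ i, Pd i x
      = gradient (fun y => L (y, Qd i x)) (Q i x) + fL (Q i x, Qd i x, U i))
    (Ld : Evec n × Evec n → ℝ)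
    (hLd : ∀ x, Ld x = h * ∑ i, b i * L (Q i x, Qd i x))
    (fdp fdm : Evec n × Evec n → Evec n)
    (hfdp : ∀ x : Evec n × Evec n, fdp x = h • ∑ i, b i •
      (ContinuousLinearMap.adjoint (fderiv ℝ (fun y => Q i (x.1, y)) x.2))
        (fL (Q i x, Qd i x, U i)))
    (hfdm : ∀ x : Evec n × Evec n, fdm x = h • ∑ i, b i •
      (ContinuousLinearMap.adjoint (fderiv ℝ (fun y => Q i (y, x.2)) x.1))
        (fL (Q i x, Qd i x, U i))) :
    ∀ x ∈ V,
      p0 x = -gradient (fun y => Ld (y, x.2)) x.1 - fdm x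
      ∧ p1 x = gradient (fun y => Ld (x.1, y)) x.2 + fdp x := by
  intro x hx
  have hVx : V ∈ nhds x := hV.mem_nhds hx
  have dQ : ∀ i, HasFDerivAt (Q i) (fderiv ℝ (Q i) x) x := fun i =>
    (((hQreg i).contDiffAt hVx).differentiableAt (by simp)).hasFDerivAt
  have dQd : ∀ i, HasFDerivAt (Qd i) (fderiv ℝ (Qd i) x) x := fun i =>
    (((hQdreg i).contDiffAt hVx).differentiableAt (by simp)).hasFDerivAt
  have dL : ∀ z, HasFDerivAt L (fderiv ℝ L z) z := fun z =>
    (hL.differentiable (by simp) z).hasFDerivAt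
  -- linearized relations
  have l1 : ∀ w : Evec n × Evec n, w.2 = w.1 + h • ∑ j, b j • fderiv ℝ (Qd j) x w := by
    have a1 : HasFDerivAt (fun y : Evec n × Evec n => y.1 + h • ∑ j, b j • Qd j y)
        (ContinuousLinearMap.fst ℝ _ _ + h • ∑ j, b j • fderiv ℝ (Qd j) x) x :=
      hasFDerivAt_fst.add ((HasFDerivAt.fun_sum fun j _ => (dQd j).const_smul (b j)).const_smul h)
    have a2 : HasFDerivAt (fun y : Evec n × Evec n => y.2)
        (ContinuousLinearMap.fst ℝ _ _ + h • ∑ j, b j • fderiv ℝ (Qd j) x) x :=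
      a1.congr_of_eventuallyEq (Filter.eventually_of_mem hVx hq1)
    intro w
    have := congrArg (fun A => A w) (hasFDerivAt_snd.unique a2)
    simpa [ContinuousLinearMap.sum_apply] using this
  have l2 : ∀ (w : Evec n × Evec n) i,
      fderiv ℝ (Q i) x w = w.1 + h • ∑ j, aa i j • fderiv ℝ (Qd j) x w := by
    intro w i
    have a1 : HasFDerivAt (fun y : Evec n × Evec n => y.1 + h • ∑ j, aa i j • Qd j y)
        (ContinuousLinearMap.fst ℝ _ _ + h • ∑ j, aa i j • fderiv ℝ (Qd j) x) x :=
      hasFDerivAt_fst.add ((HasFDerivAt.fun_sum fun j _ => (dQd j).const_smul (aa i j)).const_smul h)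
    have a2 : HasFDerivAt (Q i)
        (ContinuousLinearMap.fst ℝ _ _ + h • ∑ j, aa i j • fderiv ℝ (Qd j) x) x :=
      a1.congr_of_eventuallyEq (Filter.eventually_of_mem hVx fun y hy => hQi y hy i)
    have := congrArg (fun A => A w) ((dQ i).unique a2)
    simpa [ContinuousLinearMap.sum_apply] using this
  -- derivative of L
  have g : ∀ i (a c : Evec n), fderiv ℝ L (Q i x, Qd i x) (a, c)
      = inner ℝ (Pd i x) a + inner ℝ (P i x) c - inner ℝ (fL (Q i x, Qd i x, U i)) a := by
    intro i a c
    have k1 : HasFDerivAt (fun y => L (y, Qd i x)) _ (Q i x) :=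
      (dL (Q i x, Qd i x)).comp (Q i x) (hasFDerivAt_prodMk_left (𝕜 := ℝ) (Q i x) (Qd i x))
    have k2 : HasFDerivAt (fun y => L (Q i x, y)) _ (Qd i x) :=
      (dL (Q i x, Qd i x)).comp (Qd i x) (hasFDerivAt_prodMk_right (𝕜 := ℝ) (Q i x) (Qd i x))
    rw [hPdi x hx i, hPi x hx i, inner_add_left, inner_grad, inner_grad, k1.fderiv, k2.fderiv]
    simp only [ContinuousLinearMap.comp_apply, ContinuousLinearMap.inl_apply,
      ContinuousLinearMap.inr_apply]
    have : ((a, c) : Evec n × Evec n) = (a, 0) + (0, c) := by simp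
    rw [this, map_add]
    ring
  obtain ⟨D, hD, hDw⟩ : ∃ D : Evec n × Evec n →L[ℝ] ℝ, HasFDerivAt Ld D x ∧
      ∀ w, D w = inner ℝ (p1 x) w.2 - inner ℝ (p0 x) w.1
        - h * ∑ i, b i * inner ℝ (fL (Q i x, Qd i x, U i)) (fderiv ℝ (Q i) x w) := by
    have a1 : HasFDerivAt (fun y => h * ∑ i, b i * L (Q i y, Qd i y))
        (h • ∑ i, b i • (fderiv ℝ L (Q i x, Qd i x)).comp
          ((fderiv ℝ (Q i) x).prod (fderiv ℝ (Qd i) x))) x :=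
      (HasFDerivAt.fun_sum fun i _ => 
        (HasFDerivAt.comp x (dL (Q i x, Qd i x)) ((dQ i).prodMk (dQd i))).const_mul (b i)).const_mul h
    refine ⟨_, (funext hLd : Ld = _) ▸ a1, fun w => ?_⟩
    have := core_alg h s b bt aa ta hsymp hbbt w.1 w.2 (p0 x) (p1 x)
      (fun i => fderiv ℝ (Q i) x w) (fun i => fderiv ℝ (Qd i) x w) (fun i => P i x)
      (fun i => Pd i x) (l1 w) (l2 w) (hp1e x hx) (hPi2 x hx)
    rw [← this, ← mul_sub, ← Finset.sum_sub_distrib]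
    simp only [ContinuousLinearMap.smul_apply, ContinuousLinearMap.sum_apply, smul_eq_mul,
      ContinuousLinearMap.comp_apply, ContinuousLinearMap.prod_apply, g]
    congr 1
    refine Finset.sum_congr rfl fun i _ => ?_
    ring
  constructor
  · have k : HasFDerivAt (fun y => Ld (y, x.2)) _ x.1 :=
      HasFDerivAt.comp x.1 (f := fun y => (y, x.2)) (g := Ld) hD
        (hasFDerivAt_prodMk_left (𝕜 := ℝ) x.1 x.2)
    have kQ : ∀ i, fderiv ℝ (fun y => Q i (y, x.2)) x.1
        = (fderiv ℝ (Q i) x).comp (ContinuousLinearMap.inl ℝ _ _) := fun i =>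
      (HasFDerivAt.comp x.1 (f := fun y => (y, x.2)) (g := Q i) (dQ i)
        (hasFDerivAt_prodMk_left (𝕜 := ℝ) x.1 x.2)).fderiv
    refine ext_inner_right ℝ fun w => ?_
    rw [inner_sub_left, inner_neg_left, inner_grad, k.fderiv, hfdm]
    simp only [ContinuousLinearMap.comp_apply, ContinuousLinearMap.inl_apply, hDw, kQ,
      real_inner_smul_left, sum_inner, ContinuousLinearMap.adjoint_inner_left, inner_zero_right]
    ring
  · have k : HasFDerivAt (fun y => Ld (x.1, y)) _ x.2 :=
      HasFDerivAt.comp x.2 (f := fun y => (x.1, y)) (g := Ld) hD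
        (hasFDerivAt_prodMk_right (𝕜 := ℝ) x.1 x.2)
    have kQ : ∀ i, fderiv ℝ (fun y => Q i (x.1, y)) x.2
        = (fderiv ℝ (Q i) x).comp (ContinuousLinearMap.inr ℝ _ _) := fun i =>
      (HasFDerivAt.comp x.2 (f := fun y => (x.1, y)) (g := Q i) (dQ i)
        (hasFDerivAt_prodMk_right (𝕜 := ℝ) x.1 x.2)).fderiv
    refine ext_inner_right ℝ fun w => ?_
    rw [inner_add_left, inner_grad, k.fderiv, hfdp]
    simp only [ContinuousLinearMap.comp_apply, ContinuousLinearMap.inr_apply, hDw, kQ,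
      real_inner_smul_left, sum_inner, ContinuousLinearMap.adjoint_inner_left, inner_zero_right]
    ring
end
end
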